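/- Fix d ≥ 1, H = 2^d, and s ≥ 1. Consider two doubling walks h and h' on ℤ/Hℤ (h_{t+1} = 2·h_t + b_t mod H) with independent uniformly random starting points and independent uniform bit sequences, and let N = #{t ∈ {1,…,s} : h_t = h'_t} be the number of collisions during the first s steps. Then E[N] = s/H, E[N | N > 0] < 2 + s/H, and consequently Pr[N > 0] > s/(2H + s). -/

import Mathlib

/-- The doubling walk on `ℤ/Hℤ`: `h_0 = h0` and `h_{t+1} = 2·h_t + b_t (mod H)`,
where `b` is the sequence of driving bits. -/
def dwalk (H : ℕ) (h0 : ZMod H) (b : ℕ → Bool) : ℕ → ZMod H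
  | 0 => h0
  | t + 1 => 2 * dwalk H h0 b t + (if b t then 1 else 0)

/-- Extend a finite bit string to an infinite one (by `false`); the walk up to
time `t` only depends on the first `t` bits. -/
def extBits {t : ℕ} (b : Fin t → Bool) : ℕ → Bool :=
  fun i => if h : i < t then b ⟨i, h⟩ else false

/-!
Split a colliding pair of paths at its first collision: it has that collision plus those of a fresh
pair started from a common point. Hence `E[N] ≤ c · Pr[N > 0]` as soon as `c` bounds one plus the
expected number of collisions, in fewer than `s` steps, of a pair started on the diagonal.

After `k` steps the walk started at `x` is uniform on `2^k x + {0, …, 2^k - 1}`, hence is at a given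
residue modulo `H` with probability at most `2^{-k} + 1/H`, whatever the other walk does. Summing
over `1 ≤ k < s` shows that `c = 2 + (s - 1)/H` works. A doubling step preserves the uniform
distribution, whence `E[N] = s/H`, and dividing gives the bound on `Pr[N > 0]`.
-/

open Finset
open scoped BigOperators

section Expectations

variable {α β M : Type*} [Fintype β] [AddCommMonoid M]

lemma sum_range_zmod (H : ℕ) [NeZero H] (g : ZMod H → M) : ∑ m ∈ range H, g m = ∑ x, g x := by
  refine sum_nbij' (fun m => (m : ZMod H)) ZMod.val (fun _ _ => mem_univ _) (fun x _ => ?_)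
    (fun m hm => ?_) (fun x _ => ?_) fun _ _ => rfl
  · exact mem_range.2 x.val_lt
  · exact ZMod.val_cast_of_lt (mem_range.1 hm)
  · exact ZMod.natCast_zmod_val x

lemma sum_range_mul_zmod (H : ℕ) [NeZero H] (k : ℕ) (g : ZMod H → M) :
    ∑ m ∈ range (k * H), g m = k • ∑ x, g x := by
  induction k with
  | zero => simp
  | succ k ih => simp [add_mul, sum_range_add, ih, sum_range_zmod, succ_nsmul]

variable [Module ℚ≥0 M]

lemma expect_boole_eq_card_div_card {𝕜 : Type*} [Semifield 𝕜] [CharZero 𝕜]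
    (p : β → Prop) [DecidablePred p] :
    𝔼 b, (if p b then (1 : 𝕜) else 0) = Nat.card {b // p b} / Fintype.card β := by
  rw [Fintype.expect_eq_sum_div_card, sum_boole, ← Fintype.card_subtype, Nat.card_eq_fintype_card]

lemma expect_fin_succ_pi (n : ℕ) (g : β → (Fin n → β) → M) :
    𝔼 b : Fin (n + 1) → β, g (b 0) (Fin.tail b) = 𝔼 a, 𝔼 b, g a b := by
  rw [← expect_product', univ_product_univ]
  exact (Fintype.expect_equiv (Fin.consEquiv fun _ => β) _ _ fun _ => rfl).symm

lemma expect_pair_samples [Fintype α] {n : ℕ} (g : α × α → (Fin n → β × β) → M) :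
    𝔼 ω : α × α × (Fin n → β) × (Fin n → β),
        g (ω.1, ω.2.1) (fun i => (ω.2.2.1 i, ω.2.2.2 i)) = 𝔼 p, 𝔼 b, g p b := by
  rw [← expect_product', univ_product_univ]
  exact Fintype.expect_equiv ((Equiv.prodAssoc _ _ _).symm.trans
    ((Equiv.refl _).prodCongr (Equiv.arrowProdEquivProdArrow _ _ _).symm)) _ _ fun _ => rfl

lemma expect_range_bit (n : ℕ) (g : ℕ → M) :
    𝔼 m ∈ range n, 𝔼 a : Bool, g (2 * m + a.toNat) = 𝔼 j ∈ range (2 * n), g j := by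
  rw [expect_comm, ← expect_product']
  refine expect_equiv Equiv.boolProdNatEquivNat (fun ⟨a, m⟩ => ?_) fun ⟨a, m⟩ _ => ?_
  · have hlt : m < n ↔ 2 * m + a.toNat < 2 * n := by have := a.toNat_lt; lia
    simpa [Nat.bit_val] using hlt
  · simp [Nat.bit_val]

variable (H : ℕ) [NeZero H]

lemma expect_range_mul_zmod {k : ℕ} (hk : k ≠ 0) (g : ZMod H → M) :
    𝔼 m ∈ range (k * H), g m = 𝔼 x, g x := by
  have hk' : (k : ℚ≥0) ≠ 0 := Nat.cast_ne_zero.2 hk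
  rw [expect, sum_range_mul_zmod, expect_univ, card_range, ZMod.card,
    ← Nat.cast_smul_eq_nsmul ℚ≥0, smul_smul, Nat.cast_mul, mul_inv_rev, inv_mul_cancel_right₀ hk']

lemma expect_zmod_two_mul_add_bit (g : ZMod H → M) :
    𝔼 x, 𝔼 a : Bool, g (2 * x + a.toNat) = 𝔼 x, g x := by
  rw [← expect_range_mul_zmod H one_ne_zero, ← expect_range_mul_zmod H two_ne_zero, one_mul,
    ← expect_range_bit]
  simp only [Nat.cast_add, Nat.cast_mul, Nat.cast_ofNat]

lemma card_filter_range_natCast_eq_le (n : ℕ) (z : ZMod H) :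
    #{m ∈ range n | ((m : ℕ) : ZMod H) = z} ≤ n / H + 1 := by
  have hmod (m : ℕ) : (m : ZMod H) = z ↔ m ≡ z.val [MOD H] := by
    rw [← ZMod.natCast_eq_natCast_iff, ZMod.natCast_zmod_val]
  simp only [hmod]
  rw [← Nat.count_eq_card_filter_range, Nat.count_modEq_card n (NeZero.pos H)]
  split_ifs <;> lia

lemma expect_range_natCast_eq_le {n : ℕ} (hn : n ≠ 0) (z : ZMod H) :
    𝔼 m ∈ range n, (if (m : ZMod H) = z then (1 : ℝ) else 0) ≤ 1 / n + 1 / H := by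
  have hcard : (#{m ∈ range n | ((m : ℕ) : ZMod H) = z} : ℝ) ≤ n / H + 1 := calc
    _ ≤ ((n / H + 1 : ℕ) : ℝ) := Nat.cast_le.2 (card_filter_range_natCast_eq_le H n z)
    _ ≤ n / H + 1 := by
      push_cast
      gcongr
      exact Nat.cast_div_le
  rw [expect_eq_sum_div_card, sum_boole, card_range]
  calc (#{m ∈ range n | ((m : ℕ) : ZMod H) = z} : ℝ) / n ≤ (n / H + 1) / n := by gcongr
    _ = 1 / n + 1 / H := by field_simp; ring

end Expectations

section RandomDynamics

variable {α β : Type*} [Fintype β]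

/-- The transition operator of the Markov chain that moves from `x` to `step x a`, where the noise
`a : β` is uniform: it sends `g` to the expectation of `g` after one step. -/
noncomputable def transition (step : α → β → α) (g : α → ℝ) (x : α) : ℝ :=
  𝔼 a, g (step x a)

/-- The number of times `t ∈ {1, …, n}` at which the chain started at `x` and driven by the noise
`b` is in `S`; the starting point itself is not counted. -/
def visitCount (step : α → β → α) (S : Set α) [DecidablePred (· ∈ S)] :
    (n : ℕ) → α → (Fin n → β) → ℕ
  | 0, _, _ => 0
  | n + 1, x, b =>
    (if step x (b 0) ∈ S then 1 else 0) + visitCount step S n (step x (b 0)) (Fin.tail b)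

variable (step : α → β → α) (S : Set α) [DecidablePred (· ∈ S)]

/-- The expected number of visits to `S` at the times `1, …, n`. -/
noncomputable def meanVisits (n : ℕ) (x : α) : ℝ :=
  𝔼 b : Fin n → β, (visitCount step S n x b : ℝ)

/-- The probability of visiting `S` at some time in `{1, …, n}`. -/
noncomputable def hitProb (n : ℕ) (x : α) : ℝ :=
  𝔼 b : Fin n → β, if 0 < visitCount step S n x b then 1 else 0

lemma meanVisits_zero (x : α) : meanVisits step S 0 x = 0 := by
  simp [meanVisits, visitCount]

lemma hitProb_zero (x : α) : hitProb step S 0 x = 0 := by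
  simp [hitProb, visitCount]

lemma transition_mul_left (c : ℝ) (g : α → ℝ) (x : α) :
    transition step (fun y => c * g y) x = c * transition step g x :=
  (mul_expect _ _ _).symm

lemma transition_mono {g h : α → ℝ} (hgh : ∀ y, g y ≤ h y) (x : α) :
    transition step g x ≤ transition step h x :=
  expect_le_expect fun _ _ => hgh _

variable [Nonempty β]

lemma meanVisits_succ (n : ℕ) (x : α) :
    meanVisits step S (n + 1) x =
      transition step (fun y => (if y ∈ S then 1 else 0) + meanVisits step S n y) x := by
  refine (expect_fin_succ_pi n fun a b =>
    (((if step x a ∈ S then 1 else 0) + visitCount step S n (step x a) b : ℕ) : ℝ)).trans ?_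
  simp only [meanVisits, transition, Nat.cast_add, Nat.cast_ite, Nat.cast_one, Nat.cast_zero,
    expect_add_distrib, Fintype.expect_const]

lemma hitProb_succ (n : ℕ) (x : α) :
    hitProb step S (n + 1) x =
      transition step (fun y => if y ∈ S then 1 else hitProb step S n y) x := by
  refine (expect_fin_succ_pi n fun a b =>
    if 0 < (if step x a ∈ S then 1 else 0) + visitCount step S n (step x a) b
      then (1 : ℝ) else 0).trans ?_
  refine expect_congr rfl fun a _ => ?_
  by_cases ha : step x a ∈ S
  · simp [ha]
  · simp [ha, hitProb]

lemma meanVisits_le_mul_hitProb {c : ℝ} {n : ℕ}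
    (hc : ∀ m < n, ∀ x ∈ S, 1 + meanVisits step S m x ≤ c) (x : α) :
    meanVisits step S n x ≤ c * hitProb step S n x := by
  induction n generalizing x with
  | zero => simp [meanVisits_zero, hitProb_zero]
  | succ n ih =>
    rw [meanVisits_succ, hitProb_succ, ← transition_mul_left]
    refine transition_mono step (fun y => ?_) x
    by_cases hy : y ∈ S
    · simpa [hy] using hc n n.lt_succ_self y hy
    · simpa [hy] using ih (fun m hm => hc m (hm.trans n.lt_succ_self)) y

lemma meanVisits_eq_sum_iterate_transition (n : ℕ) (x : α) :
    meanVisits step S n x =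
      ∑ k ∈ range n, (transition step)^[k + 1] (fun y => if y ∈ S then 1 else 0) x := by
  induction n generalizing x with
  | zero => simp [meanVisits_zero]
  | succ n ih =>
    simp only [meanVisits_succ, ih, sum_range_succ', Function.iterate_succ_apply', transition,
      Function.iterate_zero_apply, expect_add_distrib, expect_sum_comm]
    rw [add_comm]

lemma expect_meanVisits [Fintype α]
    (hstep : ∀ g : α → ℝ, 𝔼 x, transition step g x = 𝔼 x, g x) (n : ℕ) :
    𝔼 x, meanVisits step S n x = n * 𝔼 x, if x ∈ S then 1 else 0 := by
  induction n with
  | zero => simp [meanVisits_zero]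
  | succ n ih =>
    simp only [meanVisits_succ]
    rw [hstep, expect_add_distrib, ih]
    push_cast
    ring

end RandomDynamics

section DoublingWalk

/-- One simultaneous step of two doubling walks, driven by a pair of bits. -/
def doublingPairStep (H : ℕ) (p : ZMod H × ZMod H) (a : Bool × Bool) : ZMod H × ZMod H :=
  (2 * p.1 + a.1.toNat, 2 * p.2 + a.2.toNat)

lemma dwalk_succ_eq_dwalk_shift (H : ℕ) (x : ZMod H) (b : ℕ → Bool) (t : ℕ) :
    dwalk H x b (t + 1) = dwalk H (2 * x + (b 0).toNat) (fun i => b (i + 1)) t := by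
  induction t with
  | zero => cases h : b 0 <;> simp [dwalk, h]
  | succ t ih => rw [dwalk, ih, dwalk]

lemma extBits_succ {n : ℕ} (b : Fin (n + 1) → Bool) (i : ℕ) :
    extBits b (i + 1) = extBits (Fin.tail b) i := by
  simp [extBits, Fin.tail]

lemma dwalk_extBits_succ (H : ℕ) {n : ℕ} (x : ZMod H) (b : Fin (n + 1) → Bool) (t : ℕ) :
    dwalk H x (extBits b) (t + 1) =
      dwalk H (2 * x + (b 0).toNat) (extBits (Fin.tail b)) t := by
  have hzero : extBits b 0 = b 0 := dif_pos n.succ_pos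
  simp only [dwalk_succ_eq_dwalk_shift, extBits_succ, hzero]

lemma card_collisions_eq_visitCount (H n : ℕ) (x y : ZMod H) (b b' : Fin n → Bool) :
    Nat.card {t : Fin n //
        dwalk H x (extBits b) (t.1 + 1) = dwalk H y (extBits b') (t.1 + 1)} =
      visitCount (doublingPairStep H) (Set.diagonal (ZMod H)) n (x, y) fun i => (b i, b' i) := by
  induction n generalizing x y with
  | zero => simp [visitCount]
  | succ n ih =>
    rw [visitCount]
    simp only [Nat.card_eq_fintype_card, Fintype.card_subtype, card_filter] at ih ⊢
    rw [Fin.sum_univ_succ]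
    simp only [dwalk_extBits_succ, Fin.val_zero, Fin.val_succ, ih]
    rfl

variable (H : ℕ)

lemma iterate_transition_doublingPairStep (k : ℕ) (g : ZMod H × ZMod H → ℝ) (x y : ZMod H) :
    (transition (doublingPairStep H))^[k] g (x, y) =
      𝔼 m ∈ range (2 ^ k), 𝔼 m' ∈ range (2 ^ k), g (2 ^ k * x + m, 2 ^ k * y + m') := by
  induction k generalizing g with
  | zero => simp
  | succ k ih =>
    have hbit (x : ZMod H) (m : ℕ) (a : Bool) :
        2 * (2 ^ k * x + m) + (a.toNat : ZMod H) =
          2 ^ (k + 1) * x + ((2 * m + a.toNat : ℕ) : ZMod H) := by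
      push_cast
      ring
    simp only [Function.iterate_succ_apply, ih, transition, doublingPairStep, hbit]
    simp only [pow_succ' 2 k, ← expect_range_bit]
    refine expect_congr rfl fun m _ => ?_
    simp only [← univ_product_univ, expect_product]
    exact expect_comm _ _ _

variable [NeZero H]

lemma expect_transition_doublingPairStep (g : ZMod H × ZMod H → ℝ) :
    𝔼 p, transition (doublingPairStep H) g p = 𝔼 p, g p := by
  simp only [transition, doublingPairStep, ← univ_product_univ, expect_product]
  calc 𝔼 x, 𝔼 y, 𝔼 a : Bool, 𝔼 a' : Bool, g (2 * x + a.toNat, 2 * y + a'.toNat)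
      = 𝔼 x, 𝔼 a : Bool, 𝔼 y, 𝔼 a' : Bool, g (2 * x + a.toNat, 2 * y + a'.toNat) :=
        expect_congr rfl fun x _ => expect_comm _ _ _
    _ = 𝔼 x, 𝔼 a : Bool, 𝔼 y, g (2 * x + a.toNat, y) :=
        expect_congr rfl fun x _ => expect_congr rfl fun a _ =>
          expect_zmod_two_mul_add_bit H fun y => g (2 * x + a.toNat, y)
    _ = 𝔼 x, 𝔼 y, g (x, y) := expect_zmod_two_mul_add_bit H fun x => 𝔼 y, g (x, y)

lemma iterate_transition_diagonal_le (k : ℕ) (p : ZMod H × ZMod H) :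
    (transition (doublingPairStep H))^[k]
        (fun q => if q ∈ Set.diagonal (ZMod H) then 1 else 0) p ≤ (1 / 2) ^ k + 1 / H := by
  obtain ⟨x, y⟩ := p
  rw [iterate_transition_doublingPairStep]
  refine expect_le (by simp) fun m _ => ?_
  have h := expect_range_natCast_eq_le H (pow_ne_zero k two_ne_zero) (2 ^ k * x + m - 2 ^ k * y)
  simpa [eq_sub_iff_add_eq', eq_comm] using h

lemma meanVisits_diagonal_le (n : ℕ) (p : ZMod H × ZMod H) :
    meanVisits (doublingPairStep H) (Set.diagonal (ZMod H)) n p ≤ 1 + n / H := by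
  have hgeom : ∑ k ∈ range n, (1 / 2 : ℝ) ^ (k + 1) ≤ 1 := by
    simp only [pow_succ, ← sum_mul]
    linarith [sum_geometric_two_le n]
  calc meanVisits (doublingPairStep H) (Set.diagonal (ZMod H)) n p
      ≤ ∑ k ∈ range n, ((1 / 2 : ℝ) ^ (k + 1) + 1 / H) := by
        rw [meanVisits_eq_sum_iterate_transition]
        exact sum_le_sum fun k _ => iterate_transition_diagonal_le H (k + 1) p
    _ = ∑ k ∈ range n, (1 / 2 : ℝ) ^ (k + 1) + n / H := by simp [sum_add_distrib, div_eq_mul_inv]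
    _ ≤ 1 + n / H := by gcongr

lemma meanVisits_diagonal_le_mul_hitProb (n : ℕ) (p : ZMod H × ZMod H) :
    meanVisits (doublingPairStep H) (Set.diagonal (ZMod H)) (n + 1) p ≤
      (2 + n / H) * hitProb (doublingPairStep H) (Set.diagonal (ZMod H)) (n + 1) p := by
  refine meanVisits_le_mul_hitProb _ _ (fun m hm q _ => ?_) p
  have hmn : (m : ℝ) / H ≤ n / H := by gcongr; lia
  linarith [meanVisits_diagonal_le H m q]

lemma expect_meanVisits_diagonal (n : ℕ) :
    𝔼 p, meanVisits (doublingPairStep H) (Set.diagonal (ZMod H)) n p = n / H := by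
  have hdiag : (𝔼 p : ZMod H × ZMod H, if p ∈ Set.diagonal (ZMod H) then (1 : ℝ) else 0) =
      1 / H := by
    simp only [← univ_product_univ, expect_product, Set.mem_diagonal_iff]
    simp
  rw [expect_meanVisits _ _ (expect_transition_doublingPairStep H), hdiag, mul_one_div]

lemma expect_meanVisits_diagonal_lt {n : ℕ} (hn : 1 ≤ n) :
    𝔼 p, meanVisits (doublingPairStep H) (Set.diagonal (ZMod H)) n p <
      (2 + n / H) * 𝔼 p, hitProb (doublingPairStep H) (Set.diagonal (ZMod H)) n p := by
  obtain ⟨n, rfl⟩ := Nat.exists_eq_add_of_le' hn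
  have hle := expect_le_expect fun p (_ : p ∈ univ) => meanVisits_diagonal_le_mul_hitProb H n p
  rw [← mul_expect] at hle
  have hH : (0 : ℝ) < H := Nat.cast_pos.2 (NeZero.pos H)
  have hmean : 0 < 𝔼 p, meanVisits (doublingPairStep H) (Set.diagonal (ZMod H)) (n + 1) p := by
    rw [expect_meanVisits_diagonal]
    positivity
  have hhit := pos_of_mul_pos_right (hmean.trans_le hle) (by positivity)
  refine hle.trans_lt ?_
  gcongr
  simp

end DoublingWalk

theorem statement10_general (H s : ℕ) (hs : 1 ≤ s) [NeZero H]
    (N : ZMod H × ZMod H × (Fin s → Bool) × (Fin s → Bool) → ℕ)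
    (hN : ∀ ω, N ω = Nat.card {t : Fin s //
        dwalk H ω.1 (extBits ω.2.2.1) (t.1 + 1)
          = dwalk H ω.2.1 (extBits ω.2.2.2) (t.1 + 1)}) :
    (∑ ω : ZMod H × ZMod H × (Fin s → Bool) × (Fin s → Bool), (N ω : ℝ))
        / Fintype.card (ZMod H × ZMod H × (Fin s → Bool) × (Fin s → Bool))
      = s / H
    ∧ (∑ ω : ZMod H × ZMod H × (Fin s → Bool) × (Fin s → Bool), (N ω : ℝ))
        < (2 + s / H) *
          Nat.card {ω : ZMod H × ZMod H × (Fin s → Bool) × (Fin s → Bool) //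
            0 < N ω}
    ∧ (Nat.card {ω : ZMod H × ZMod H × (Fin s → Bool) × (Fin s → Bool) //
          0 < N ω} : ℝ)
        / Fintype.card (ZMod H × ZMod H × (Fin s → Bool) × (Fin s → Bool))
      > s / (2 * H + s) := by
  have hvisit (ω) := (hN ω).trans (card_collisions_eq_visitCount H s _ _ ω.2.2.1 ω.2.2.2)
  have hmean : 𝔼 ω, (N ω : ℝ) = 𝔼 p, meanVisits (doublingPairStep H) (Set.diagonal _) s p := by
    simp only [hvisit]
    exact expect_pair_samples fun p b => (visitCount _ _ s p b : ℝ)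
  have hhit : 𝔼 ω, (if 0 < N ω then (1 : ℝ) else 0) =
      𝔼 p, hitProb (doublingPairStep H) (Set.diagonal _) s p := by
    simp only [hvisit]
    exact expect_pair_samples fun p b => if 0 < visitCount _ _ s p b then (1 : ℝ) else 0
  have hexpect := expect_meanVisits_diagonal H s
  have hlt := expect_meanVisits_diagonal_lt H hs
  rw [← hmean, Fintype.expect_eq_sum_div_card] at hexpect hlt
  rw [← hhit, expect_boole_eq_card_div_card] at hlt
  have hH : (0 : ℝ) < H := Nat.cast_pos.2 (NeZero.pos H)
  refine ⟨hexpect, ?_, ?_⟩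
  · rw [← mul_div_assoc] at hlt
    exact (div_lt_div_iff_of_pos_right (Nat.cast_pos.2 Fintype.card_pos)).1 hlt
  · rw [hexpect, div_lt_iff₀ hH] at hlt
    rw [gt_iff_lt, div_lt_iff₀ (by positivity)]
    refine hlt.trans_eq ?_
    field_simp

/-- Fix `d ≥ 1`, `H = 2^d` and `s ≥ 1`.  For two doubling
walks on `ℤ/Hℤ` with independent uniform starting points and independent uniform
driving bits, let `N` be the number of times `t ∈ {1,…,s}` at which the two
walks collide.  Then `E[N] = s/H`, `E[N | N > 0] < 2 + s/H` and consequently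
`Pr[N > 0] > s/(2H + s)`. -/
theorem statement10 (d : ℕ) (hd : 1 ≤ d) (H s : ℕ) (hH : H = 2 ^ d)
    (hs : 1 ≤ s) [NeZero H]
    (N : ZMod H × ZMod H × (Fin s → Bool) × (Fin s → Bool) → ℕ)
    (hN : ∀ ω, N ω = Nat.card {t : Fin s //
        dwalk H ω.1 (extBits ω.2.2.1) (t.1 + 1)
          = dwalk H ω.2.1 (extBits ω.2.2.2) (t.1 + 1)}) :
    (∑ ω : ZMod H × ZMod H × (Fin s → Bool) × (Fin s → Bool), (N ω : ℝ))
        / Fintype.card (ZMod H × ZMod H × (Fin s → Bool) × (Fin s → Bool))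
      = s / H
    ∧ (∑ ω : ZMod H × ZMod H × (Fin s → Bool) × (Fin s → Bool), (N ω : ℝ))
        < (2 + s / H) *
          Nat.card {ω : ZMod H × ZMod H × (Fin s → Bool) × (Fin s → Bool) //
            0 < N ω}
    ∧ (Nat.card {ω : ZMod H × ZMod H × (Fin s → Bool) × (Fin s → Bool) //
          0 < N ω} : ℝ)
        / Fintype.card (ZMod H × ZMod H × (Fin s → Bool) × (Fin s → Bool))
      > s / (2 * H + s) :=
  statement10_general H s hs N hN
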